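/- Let n ≥ m ≥ 3 and let W be a set of walls on the grid G_{n,m} such that for every column index j with 2 ≤ j ≤ m−1, W contains at least one vertical wall adjacent to column C_j (i.e., every such column is covered by W). Then |W| ≥ ρ(P_{m−2}) = ⌈(m−2)/2⌉, the edge covering number of the path on m−2 vertices. -/

import Mathlib

/-- Squares, given as (row, column) pairs of integers. -/
abbrev Sq : Type := ℤ × ℤ

/-- `p` is a square of the grid `G_{n,m}` (rows `1..n`, columns `1..m`). -/
def inGrid (n m : ℕ) (p : Sq) : Prop :=
  1 ≤ p.1 ∧ p.1 ≤ (n : ℤ) ∧ 1 ≤ p.2 ∧ p.2 ≤ (m : ℤ)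

/-- A wall, recorded as the ordered pair of the two adjacent grid squares it
separates (right neighbour for a vertical wall, lower neighbour for a horizontal
wall).  A vertical wall `(p, p + (0,1))` separates two horizontally adjacent squares;
a horizontal wall `(p, p + (1,0))` separates two vertically adjacent squares. -/
def IsWall (n m : ℕ) (w : Sq × Sq) : Prop :=
  inGrid n m w.1 ∧ inGrid n m w.2 ∧
    (w.2 = w.1 + ((0 : ℤ), (1 : ℤ)) ∨ w.2 = w.1 + ((1 : ℤ), (0 : ℤ)))

/-- All members of `W` are genuine walls of the grid `G_{n,m}`. -/
def WallsOK (n m : ℕ) (W : Finset (Sq × Sq)) : Prop := ∀ w ∈ W, IsWall n m w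

/-- There is a wall of `W` on the common side of the squares `p` and `q`. -/
def WallBetween (W : Finset (Sq × Sq)) (p q : Sq) : Prop :=
  (p, q) ∈ W ∨ (q, p) ∈ W

/-- `S` is an edge cover of `G`: a set of edges of `G` such that every vertex is
incident to at least one edge of `S`. -/
def IsEdgeCover {V : Type*} (G : SimpleGraph V) (S : Finset (Sym2 V)) : Prop :=
  (∀ e ∈ S, e ∈ G.edgeSet) ∧ ∀ v : V, ∃ e ∈ S, v ∈ e

/-- The edge covering number `ρ(G)`. -/
noncomputable def edgeCoverNumber {V : Type*} (G : SimpleGraph V) : ℕ :=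
  sInf {k | ∃ S : Finset (Sym2 V), IsEdgeCover G S ∧ S.card = k}

/-! Each wall touches at most two columns, just as each edge of a graph has at most two endpoints,
so `k` columns cannot be covered by fewer than `⌈k / 2⌉` walls. The same count bounds edge covers
of `P_k` from below, and for `k ≥ 2` the bound is attained by pairing up consecutive vertices. -/

open SimpleGraph

theorem card_le_two_mul_card_of_forall_exists_mem_sym2 {α ι : Type*} {t : Finset α} {s : Finset ι}
    (f : ι → Sym2 α) (h : ∀ a ∈ t, ∃ i ∈ s, a ∈ f i) : t.card ≤ 2 * s.card := by
  classical
  have hsub : t ⊆ s.biUnion fun i => (f i).toFinset := fun a ha => by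
    simpa only [Finset.mem_biUnion, Sym2.mem_toFinset] using h a ha
  have hpair : ∀ i ∈ s, (f i).toFinset.card ≤ 2 := fun i _ => by
    rw [Sym2.card_toFinset]
    split_ifs <;> decide
  calc t.card ≤ (s.biUnion fun i => (f i).toFinset).card := Finset.card_le_card hsub
    _ ≤ s.card * 2 := Finset.card_biUnion_le_card_mul s _ 2 hpair
    _ = 2 * s.card := Nat.mul_comm _ _

section EdgeCover

variable {V : Type*} {G : SimpleGraph V} {S : Finset (Sym2 V)}

theorem IsEdgeCover.card_le_two_mul_card [Fintype V] (h : IsEdgeCover G S) :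
    Fintype.card V ≤ 2 * S.card :=
  card_le_two_mul_card_of_forall_exists_mem_sym2 id fun v _ => h.2 v

theorem IsEdgeCover.edgeCoverNumber_le_card (h : IsEdgeCover G S) : edgeCoverNumber G ≤ S.card :=
  Nat.sInf_le ⟨S, h, rfl⟩

theorem IsEdgeCover.exists_card_eq_edgeCoverNumber (h : IsEdgeCover G S) :
    ∃ T : Finset (Sym2 V), IsEdgeCover G T ∧ T.card = edgeCoverNumber G :=
  Nat.sInf_mem (s := {k | ∃ T : Finset (Sym2 V), IsEdgeCover G T ∧ T.card = k})
    ⟨S.card, S, h, rfl⟩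

theorem IsEdgeCover.card_le_two_mul_edgeCoverNumber [Fintype V] (h : IsEdgeCover G S) :
    Fintype.card V ≤ 2 * edgeCoverNumber G := by
  obtain ⟨T, hT, hcard⟩ := h.exists_card_eq_edgeCoverNumber
  exact hcard ▸ hT.card_le_two_mul_card

theorem edgeCoverNumber_of_isEmpty [IsEmpty V] : edgeCoverNumber G = 0 := by
  have hcover : IsEdgeCover G ∅ := ⟨by simp, isEmptyElim⟩
  exact Nat.le_zero.1 hcover.edgeCoverNumber_le_card

theorem IsEdgeCover.not_isIsolated (h : IsEdgeCover G S) (v : V) : ¬G.IsIsolated v := by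
  obtain ⟨e, heS, w, rfl⟩ := h.2 v
  exact fun hv => hv w (h.1 _ heS)

-- With an isolated vertex there is no edge cover, and the infimum of the empty set is `0`.
theorem edgeCoverNumber_eq_zero_of_isIsolated {v : V} (hv : G.IsIsolated v) :
    edgeCoverNumber G = 0 := by
  refine Nat.sInf_eq_zero.2 (Or.inr (Set.eq_empty_iff_forall_notMem.2 ?_))
  rintro _ ⟨S, hS, -⟩
  exact hS.not_isIsolated v hv

end EdgeCover

/-- The `i`-th edge `{2 * i, 2 * i + 1}` of the standard edge cover of the path on `k + 2`
vertices. The truncation at `k` turns the last edge, which would leave the path when `k` is odd,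
into `{k, k + 1}`. -/
def pathCoverEdge (k i : ℕ) : Sym2 (Fin (k + 2)) :=
  s(⟨min (2 * i) k, by omega⟩, ⟨min (2 * i) k + 1, by omega⟩)

theorem pathCoverEdge_mem_edgeSet (k i : ℕ) : pathCoverEdge k i ∈ (pathGraph (k + 2)).edgeSet := by
  simp [pathCoverEdge, pathGraph_adj]

theorem mem_pathCoverEdge_half {k : ℕ} (v : Fin (k + 2)) : v ∈ pathCoverEdge k (v / 2) := by
  simp only [pathCoverEdge, Sym2.mem_iff, Fin.ext_iff]
  omega

/-- The standard edge cover of the path on `k + 2` vertices, with `⌈(k + 2) / 2⌉` edges: consecutive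
vertices are paired up from the left, and an unpaired last vertex is joined to its neighbour. -/
def pathCover (k : ℕ) : Finset (Sym2 (Fin (k + 2))) :=
  (Finset.range ((k + 3) / 2)).image (pathCoverEdge k)

theorem card_pathCover_le (k : ℕ) : (pathCover k).card ≤ (k + 3) / 2 :=
  Finset.card_image_le.trans_eq (Finset.card_range _)

theorem isEdgeCover_pathCover (k : ℕ) : IsEdgeCover (pathGraph (k + 2)) (pathCover k) := by
  refine ⟨fun e he => ?_, fun v => ?_⟩
  · obtain ⟨i, -, rfl⟩ := Finset.mem_image.1 he
    exact pathCoverEdge_mem_edgeSet k i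
  · have hv : (v : ℕ) / 2 < (k + 3) / 2 := by omega
    exact ⟨pathCoverEdge k (v / 2), Finset.mem_image_of_mem _ (Finset.mem_range.2 hv),
      mem_pathCoverEdge_half v⟩

theorem edgeCoverNumber_pathGraph_one : edgeCoverNumber (pathGraph 1) = 0 :=
  edgeCoverNumber_eq_zero_of_isIsolated (v := 0) fun _ hw => hw.ne (Subsingleton.elim _ _)

theorem edgeCoverNumber_pathGraph {k : ℕ} (hk : k ≠ 1) :
    edgeCoverNumber (pathGraph k) = (k + 1) / 2 := by
  match k with
  | 0 => exact edgeCoverNumber_of_isEmpty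
  | k + 2 =>
    have hcover := isEdgeCover_pathCover k
    have hle : edgeCoverNumber (pathGraph (k + 2)) ≤ (k + 3) / 2 :=
      hcover.edgeCoverNumber_le_card.trans (card_pathCover_le k)
    have hge : k + 2 ≤ 2 * edgeCoverNumber (pathGraph (k + 2)) := by
      simpa only [Fintype.card_fin] using hcover.card_le_two_mul_edgeCoverNumber
    omega

theorem edgeCoverNumber_pathGraph_le (k : ℕ) : edgeCoverNumber (pathGraph k) ≤ (k + 1) / 2 := by
  rcases eq_or_ne k 1 with rfl | hk
  · exact edgeCoverNumber_pathGraph_one.trans_le (Nat.zero_le _)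
  · exact (edgeCoverNumber_pathGraph hk).le

theorem stmt15_general (k : ℕ) (a : ℤ) (W : Finset (Sq × Sq))
    (hcov : ∀ j ∈ Finset.Ico a (a + k), ∃ w ∈ W, w.1.2 = j ∨ w.2.2 = j) :
    edgeCoverNumber (pathGraph k) ≤ W.card ∧ (k + 1) / 2 ≤ W.card := by
  have hcount : (Finset.Ico a (a + k)).card ≤ 2 * W.card :=
    card_le_two_mul_card_of_forall_exists_mem_sym2 (fun w => s(w.1.2, w.2.2)) fun j hj => by
      simpa only [Sym2.mem_iff, eq_comm (a := j)] using hcov j hj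
  have hcard : (Finset.Ico a (a + k)).card = k := by simp
  have hhalf : (k + 1) / 2 ≤ W.card := by omega
  exact ⟨(edgeCoverNumber_pathGraph_le k).trans hhalf, hhalf⟩

/-- If `n ≥ m ≥ 3` and `W` is a set of walls on `G_{n,m}` such that every column
`C_j` with `2 ≤ j ≤ m-1` is covered by `W` (i.e. some vertical wall of `W` is
adjacent to column `C_j`), then `|W| ≥ ρ(P_{m-2}) = ⌈(m-2)/2⌉`. -/
theorem stmt15 (n m : ℕ) (hm : 3 ≤ m) (hmn : m ≤ n) (W : Finset (Sq × Sq))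
    (hW : WallsOK n m W)
    (hcov : ∀ j : ℤ, 2 ≤ j → j ≤ (m : ℤ) - 1 →
      ∃ w ∈ W, w.2 = w.1 + ((0 : ℤ), (1 : ℤ)) ∧ (w.1.2 = j ∨ w.2.2 = j)) :
    edgeCoverNumber (SimpleGraph.pathGraph (m - 2)) ≤ W.card ∧
    (m - 2 + 1) / 2 ≤ W.card := by
  refine stmt15_general (m - 2) 2 W fun j hj => ?_
  exact (hcov j (by grind) (by grind)).imp fun _ hw => ⟨hw.1, hw.2.2⟩
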